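/- For every n ≥ 1 and every x ∈ H_n(ℍ_ℂ), det(x̂) = (dt_n(x))², where det is the usual determinant of 2n×2n complex matrices. -/

import Mathlib

/-!
Entrywise application of the algebra homomorphism `x ↦ x̂` turns the noncommutative Schur complement
of the entry `x₁₁` into a block Schur complement. The diagonal entry `x₁₁` is a scalar, so its block
has determinant `x₁₁²`, and `det x̂` is `x₁₁²` times the determinant of the hat of the Schur
complement. This is the square of the recursion for `dt`, which settles the case `x₁₁ ≠ 0` by
induction. Adding scalar matrices to `x` shows that these matrices are dense in `H_n(ℍ_ℂ)`, and both
sides of the identity are continuous there.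
-/

noncomputable section

open Matrix

/-- The biquaternions `ℍ_ℂ`: quaternions with complex coefficients. -/
abbrev HC : Type := Quaternion ℂ

/-- The embedding `ℂ ⊆ ℍ_ℂ` as scalar biquaternions. -/
def cq (z : ℂ) : HC := ⟨z, 0, 0, 0⟩

/-- The `ℂ`-linear involution `x ↦ x⋄` (quaternion conjugation). -/
def qdia (x : HC) : HC := ⟨x.re, -x.imI, -x.imJ, -x.imK⟩

/-- Coefficientwise complex conjugation `x ↦ x̄`. -/
def qbar (x : HC) : HC :=
  ⟨starRingEnd ℂ x.re, starRingEnd ℂ x.imI, starRingEnd ℂ x.imJ, starRingEnd ℂ x.imK⟩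

/-- The conjugate-linear involution `x* = (x̄)⋄`. -/
def qstar (x : HC) : HC := qdia (qbar x)

/-- The natural (Euclidean/product) topology on the biquaternions `ℍ_ℂ ≅ ℂ⁴`. -/
instance : TopologicalSpace HC :=
  TopologicalSpace.induced (fun q : HC => (q.re, q.imI, q.imJ, q.imK)) inferInstance

/-- The 2×2 complex matrix `x̂` associated to a biquaternion `x`. -/
def hat (x : HC) : Matrix (Fin 2) (Fin 2) ℂ :=
  !![x.re + Complex.I * x.imI, x.imJ + Complex.I * x.imK;
     -x.imJ + Complex.I * x.imK, x.re - Complex.I * x.imI]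

/-- The `2n × 2n` complex matrix `Â` obtained by replacing every biquaternion entry `a`
of `A` by the 2×2 block `â`. -/
def hatM {n : ℕ} (A : Matrix (Fin n) (Fin n) HC) :
    Matrix (Fin n × Fin 2) (Fin n × Fin 2) ℂ :=
  Matrix.of fun p q => hat (A p.1 q.1) p.2 q.2

/-- `A` is `⋄`-hermitian: `Aᵈ = A`, i.e. `(A j i)⋄ = A i j` for all `i j`.
`H_n(ℍ_ℂ)` is the collection of all such matrices. -/
def IsHerm {n : ℕ} (A : Matrix (Fin n) (Fin n) HC) : Prop :=
  ∀ i j, qdia (A j i) = A i j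

/-- The defining properties of the sequence of determinants `(dt_n)_{n ≥ 1}`:
`D n` plays the role of `dt_{n+1} : H_{n+1}(ℍ_ℂ) → ℍ_ℂ`.
(i) continuity on `H_{n+1}(ℍ_ℂ)`; (ii) `dt₁((x₁₁)) = x₁₁`;
(iii) the inductive formula for `dt_{n+1}` when `x₁₁ ≠ 0`. -/
def IsDtSeq (D : ∀ n : ℕ, Matrix (Fin (n + 1)) (Fin (n + 1)) HC → HC) : Prop :=
  (∀ n : ℕ, ContinuousOn (D n) {A | IsHerm A}) ∧
  (∀ A : Matrix (Fin 1) (Fin 1) HC, IsHerm A → D 0 A = A 0 0) ∧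
  (∀ (n : ℕ) (A : Matrix (Fin (n + 2)) (Fin (n + 2)) HC), IsHerm A → A 0 0 ≠ 0 →
    D (n + 1) A = A 0 0 *
      D n (Matrix.of fun i j : Fin (n + 1) =>
        A i.succ j.succ - Ring.inverse (A 0 0) * A i.succ 0 * A 0 j.succ))

section SchurComplement

open scoped Ring

variable {R S m : Type*} {n : ℕ}

/-- The Schur complement of the upper left entry of a matrix over a noncommutative ring. It is the
expected object only if that entry is a unit, since `a⁻¹ʳ = 0` for every non-unit `a`. -/
def schurComplement [Ring R] (M : Matrix (Fin (n + 1)) (Fin (n + 1)) R) :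
    Matrix (Fin n) (Fin n) R :=
  of fun i j => M i.succ j.succ - M i.succ 0 * (M 0 0)⁻¹ʳ * M 0 j.succ

lemma schurComplement_map [Ring R] [Ring S] (f : R →+* S)
    {M : Matrix (Fin (n + 1)) (Fin (n + 1)) R} (h : IsUnit (M 0 0)) :
    schurComplement (M.map f) = (schurComplement M).map f := by
  obtain ⟨u, hu⟩ := h
  have hinv : (f u)⁻¹ʳ = f ↑u⁻¹ := Ring.inverse_unit (Units.map f.toMonoidHom u)
  ext i j
  simp [schurComplement, ← hu, hinv]

lemma isHermitian_schurComplement [Ring R] [StarRing R]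
    {M : Matrix (Fin (n + 1)) (Fin (n + 1)) R} (hM : M.IsHermitian) :
    (schurComplement M).IsHermitian := by
  refine IsHermitian.ext fun i j => ?_
  simp only [schurComplement, of_apply, star_sub, star_mul, ← Ring.inverse_star, hM.apply,
    mul_assoc]

lemma det_comp_eq_det_mul_det_comp_schurComplement [CommRing R] [Fintype m] [DecidableEq m]
    {M : Matrix (Fin (n + 1)) (Fin (n + 1)) (Matrix m m R)} (h : IsUnit (M 0 0)) :
    (comp _ _ _ _ R M).det = (M 0 0).det * (comp _ _ _ _ R (schurComplement M)).det := by
  let := h.invertible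
  let e : Fin (n + 1) × m ≃ m ⊕ Fin n × m :=
    ((finSuccEquiv n).prodCongr (Equiv.refl m)).trans optionProdEquiv
  have hblocks : reindex e e (comp _ _ _ _ R M) =
      fromBlocks (M 0 0) (of fun k q => M 0 q.1.succ k q.2) (of fun p k => M p.1.succ 0 p.2 k)
        (of fun p q => M p.1.succ q.1.succ p.2 q.2) := by
    ext (k | p) (l | q) <;> rfl
  rw [← det_reindex_self e, hblocks, det_fromBlocks₁₁]
  congr 2
  ext p q
  simp only [schurComplement, comp_apply, of_apply, Matrix.sub_apply, Ring.inverse_invertible]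
  rfl

end SchurComplement

lemma det_comp_of_unique {ι m R : Type*} [Unique ι] [Fintype ι] [DecidableEq ι] [Fintype m]
    [DecidableEq m] [CommRing R] (M : Matrix ι ι (Matrix m m R)) :
    (comp _ _ _ _ R M).det = (M default default).det := by
  rw [← det_reindex_self (Equiv.uniqueProd m ι)]
  rfl

/-- The images of `i`, `j`, `k` under the isomorphism `ℍ_ℂ ≅ M₂(ℂ)`. -/
def hatBasis : QuaternionAlgebra.Basis (Matrix (Fin 2) (Fin 2) ℂ) (-1 : ℂ) 0 (-1) where
  i := !![Complex.I, 0; 0, -Complex.I]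
  j := !![0, 1; -1, 0]
  k := !![0, Complex.I; Complex.I, 0]
  i_mul_i := by simp [one_fin_two]
  j_mul_j := by simp [one_fin_two]
  i_mul_j := by simp
  j_mul_i := by simp

/-- The map `hat` as a homomorphism of complex algebras. -/
def hatAlgHom : HC →ₐ[ℂ] Matrix (Fin 2) (Fin 2) ℂ :=
  hatBasis.liftHom

lemma hatAlgHom_apply (x : HC) : hatAlgHom x = hat x := by
  have happly : hatAlgHom x = hatBasis.lift x := rfl
  ext i j
  fin_cases i <;> fin_cases j <;>
    simp [happly, QuaternionAlgebra.Basis.lift, hatBasis, hat, algebraMap_eq_diagonal, mul_comm,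
      sub_eq_add_neg]

lemma det_hat (x : HC) : (hat x).det = Quaternion.normSq x := by
  simp only [hat, det_fin_two_of, Quaternion.normSq_def']
  linear_combination (-x.imI ^ 2 - x.imK ^ 2) * Complex.I_sq

lemma hatM_eq_comp {n : ℕ} (A : Matrix (Fin n) (Fin n) HC) :
    hatM A = comp _ _ _ _ ℂ (A.map hatAlgHom) := by
  ext p q
  simp [hatM, hatAlgHom_apply]

lemma det_hatM_fin_one (A : Matrix (Fin 1) (Fin 1) HC) :
    (hatM A).det = Quaternion.normSq (A 0 0) := by
  rw [hatM_eq_comp, det_comp_of_unique, map_apply, hatAlgHom_apply, det_hat]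
  rfl

lemma det_hatM_eq_normSq_mul {n : ℕ} {A : Matrix (Fin (n + 1)) (Fin (n + 1)) HC}
    (h : IsUnit (A 0 0)) :
    (hatM A).det = Quaternion.normSq (A 0 0) * (hatM (schurComplement A)).det := by
  have hmap : schurComplement (A.map hatAlgHom) = (schurComplement A).map hatAlgHom :=
    schurComplement_map hatAlgHom.toRingHom h
  rw [hatM_eq_comp, det_comp_eq_det_mul_det_comp_schurComplement (h.map hatAlgHom), hmap,
    ← hatM_eq_comp, map_apply, hatAlgHom_apply, det_hat]

namespace HC

lemma continuous_iff {X : Type*} [TopologicalSpace X] {f : X → HC} :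
    Continuous f ↔ Continuous (fun x => (f x).re) ∧ Continuous (fun x => (f x).imI) ∧
      Continuous (fun x => (f x).imJ) ∧ Continuous (fun x => (f x).imK) := by
  simp only [continuous_induced_rng, Function.comp_def, continuous_prodMk]

@[fun_prop]
lemma continuous_re : Continuous fun x : HC => x.re :=
  (continuous_iff.mp continuous_id).1

@[fun_prop]
lemma continuous_imI : Continuous fun x : HC => x.imI :=
  (continuous_iff.mp continuous_id).2.1

@[fun_prop]
lemma continuous_imJ : Continuous fun x : HC => x.imJ :=
  (continuous_iff.mp continuous_id).2.2.1

@[fun_prop]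
lemma continuous_imK : Continuous fun x : HC => x.imK :=
  (continuous_iff.mp continuous_id).2.2.2

@[fun_prop]
lemma continuous_coe : Continuous fun z : ℂ => (z : HC) :=
  continuous_iff.mpr ⟨continuous_id, continuous_const, continuous_const, continuous_const⟩

instance : IsTopologicalSemiring HC where
  continuous_add := continuous_iff.mpr <| by
    simp only [Quaternion.re_add, Quaternion.imI_add, Quaternion.imJ_add, Quaternion.imK_add]
    refine ⟨?_, ?_, ?_, ?_⟩ <;> fun_prop
  continuous_mul := continuous_iff.mpr <| by
    simp only [Quaternion.re_mul, Quaternion.imI_mul, Quaternion.imJ_mul, Quaternion.imK_mul]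
    refine ⟨?_, ?_, ?_, ?_⟩ <;> fun_prop

instance : T2Space HC :=
  T2Space.of_injective_continuous (f := fun q : HC => (q.re, q.imI, q.imJ, q.imK))
    (fun x y h => by
      simp only [Prod.mk.injEq] at h
      exact QuaternionAlgebra.ext h.1 h.2.1 h.2.2.1 h.2.2.2)
    continuous_induced_dom

end HC

lemma continuous_hat : Continuous hat := by
  refine continuous_matrix fun i j => ?_
  fin_cases i <;> fin_cases j <;> dsimp [hat] <;> fun_prop

lemma continuous_hatM {n : ℕ} : Continuous (hatM (n := n)) :=
  continuous_matrix fun p q =>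
    (continuous_hat.comp (continuous_id.matrix_elem p.1 q.1)).matrix_elem p.2 q.2

lemma cq_eq_coe (z : ℂ) : cq z = z :=
  rfl

lemma qdia_eq_star (x : HC) : qdia x = star x := by
  ext <;> simp [qdia]

lemma isHerm_iff_isHermitian {n : ℕ} {A : Matrix (Fin n) (Fin n) HC} :
    IsHerm A ↔ A.IsHermitian := by
  simp only [IsHerm, qdia_eq_star, IsHermitian.ext_iff]

namespace IsHerm

variable {n : ℕ} {A : Matrix (Fin n) (Fin n) HC}

protected lemma isHermitian (hA : IsHerm A) : A.IsHermitian :=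
  isHerm_iff_isHermitian.mp hA

lemma diag_eq_coe_re (hA : IsHerm A) (i : Fin n) : A i i = ((A i i).re : HC) :=
  Quaternion.star_eq_self.mp (hA.isHermitian.apply i i)

lemma commute_diag (hA : IsHerm A) (i : Fin n) (x : HC) : Commute (A i i) x := by
  rw [hA.diag_eq_coe_re i]
  exact Quaternion.coe_commute _ x

lemma isUnit_diag (hA : IsHerm A) {i : Fin n} (h : A i i ≠ 0) : IsUnit (A i i) := by
  rw [hA.diag_eq_coe_re i] at h ⊢
  have hre : (A i i).re ≠ 0 := fun h0 => h (by rw [h0, Quaternion.coe_zero])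
  exact (IsUnit.mk0 _ hre).map (algebraMap ℂ HC)

lemma cq_normSq_diag (hA : IsHerm A) (i : Fin n) :
    cq (Quaternion.normSq (A i i)) = A i i ^ 2 := by
  rw [cq_eq_coe, ← Quaternion.self_mul_star, hA.isHermitian.apply, sq]

protected lemma schurComplement {A : Matrix (Fin (n + 1)) (Fin (n + 1)) HC} (hA : IsHerm A) :
    IsHerm (schurComplement A) :=
  isHerm_iff_isHermitian.mpr (isHermitian_schurComplement hA.isHermitian)

lemma cq_det_hatM {A : Matrix (Fin (n + 1)) (Fin (n + 1)) HC} (hA : IsHerm A) (h : A 0 0 ≠ 0) :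
    cq (hatM A).det = A 0 0 ^ 2 * cq (hatM (schurComplement A)).det := by
  rw [det_hatM_eq_normSq_mul (hA.isUnit_diag h), ← hA.cq_normSq_diag 0]
  simp only [cq_eq_coe, Quaternion.coe_mul]

lemma mem_closure_diag_ne_zero (hA : IsHerm A) (i : Fin n) :
    A ∈ closure {B | IsHerm B ∧ B i i ≠ 0} := by
  let shift (z : ℂ) : Matrix (Fin n) (Fin n) HC := A + diagonal fun _ => (z : HC)
  have hcont : Continuous shift :=
    continuous_const.add (continuous_pi fun _ => HC.continuous_coe).matrix_diagonal
  have hmaps : Set.MapsTo shift {-(A i i).re}ᶜ {B | IsHerm B ∧ B i i ≠ 0} := by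
    intro z hz
    have hscalar : (diagonal fun _ : Fin n => (z : HC)).IsHermitian :=
      isHermitian_diagonal_iff.mpr fun _ => by rw [IsSelfAdjoint, Quaternion.star_coe]
    have hre : (shift z i i).re = (A i i).re + z := by simp [shift]
    refine ⟨isHerm_iff_isHermitian.mpr (hA.isHermitian.add hscalar), fun h0 => hz ?_⟩
    rw [h0, Quaternion.re_zero] at hre
    exact eq_neg_of_add_eq_zero_right hre.symm
  have hzero : shift 0 = A := by simp [shift]
  exact hzero ▸ map_mem_closure hcont (dense_compl_singleton (-(A i i).re) 0) hmaps

end IsHerm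

lemma IsDtSeq.apply_succ {D : ∀ n : ℕ, Matrix (Fin (n + 1)) (Fin (n + 1)) HC → HC}
    (hD : IsDtSeq D) {n : ℕ} {A : Matrix (Fin (n + 2)) (Fin (n + 2)) HC} (hA : IsHerm A)
    (h : A 0 0 ≠ 0) : D (n + 1) A = A 0 0 * D n (schurComplement A) := by
  obtain ⟨u, hu⟩ := hA.isUnit_diag h
  have hcomm (x : HC) : Commute (Ring.inverse (A 0 0)) x := by
    rw [← hu, Ring.inverse_unit]
    exact Commute.units_inv_left (hu ▸ hA.commute_diag 0 x)
  simp only [hD.2.2 n A hA h, schurComplement, (hcomm _).eq]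

/-- For every `n ≥ 1` and every `x ∈ H_n(ℍ_ℂ)`,
`det(x̂) = (dt_n(x))²` (here `D n = dt_{n+1}`). -/
theorem statement2 (D : ∀ n : ℕ, Matrix (Fin (n + 1)) (Fin (n + 1)) HC → HC)
    (hD : IsDtSeq D) (n : ℕ) (A : Matrix (Fin (n + 1)) (Fin (n + 1)) HC)
    (hA : IsHerm A) :
    cq (Matrix.det (hatM A)) = (D n A) ^ 2 := by
  induction n with
  | zero =>
    rw [hD.2.1 A hA, det_hatM_fin_one, hA.cq_normSq_diag 0]
  | succ n ih =>
    have heq : Set.EqOn (fun B => cq (hatM B).det) (fun B => D (n + 1) B ^ 2)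
        {B | IsHerm B ∧ B 0 0 ≠ 0} := by
      rintro B ⟨hB, h⟩
      change cq (hatM B).det = D (n + 1) B ^ 2
      rw [hB.cq_det_hatM h, ih _ hB.schurComplement, hD.apply_succ hB h,
        (hB.commute_diag 0 _).mul_pow]
    have hcont : Continuous fun B : Matrix (Fin (n + 2)) (Fin (n + 2)) HC => cq (hatM B).det :=
      HC.continuous_coe.comp continuous_hatM.matrix_det
    exact heq.of_subset_closure hcont.continuousOn ((hD.1 (n + 1)).pow 2) (fun _ hB => hB.1)
      (fun _ hB => hB.mem_closure_diag_ne_zero 0) hA
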